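/- arXiv:2102.04200 — 3 statements merged into one kernel-verified Lean document; each statement's English description precedes it below -/
import Mathlib

section
/- For every constant c < 2π there exists σ₀ > 0 such that the following holds: if X is a random variable taking values in the nonnegative integers with finite mean μ and finite variance σ² satisfying μ ≤ c·σ² and σ² ≥ σ₀, then H(X) < (1/2) ln(2πeσ²). -/
open MeasureTheory Real

/-!
Gibbs' inequality bounds the entropy of `p` by its cross entropy relative to any positive weights of
total mass less than `1`. Take for weights the density of `N(μ, σ²)` at the nonnegative integers:
the cross entropy is then exactly `(1/2) ln (2πeσ²)`, so it suffices to bound their mass by `1`.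

By Poisson summation the density sums over all of `ℤ` to a cosine theta series at `2πσ²`, which
exceeds `1` by at most `4 exp (-2π²σ²)`. The nonnegative integers miss at least the value at `-1`.
As `μ ≤ cσ²`, that value is of order at least `exp (-c²σ²/2) / √(2πσ²)`, and since `c²/2 < 2π²` it
outweighs the excess once `σ²` is large.
-/

open Filter HurwitzZeta ProbabilityTheory Topology
open scoped NNReal

section Gibbs

variable {ι : Type*} {p q : ι → ℝ}

/-- The Shannon entropy, in nats, of a discrete random variable with probability mass function `p`.
Its value is `0` when the series diverges. -/
noncomputable def shannonEntropy (p : ι → ℝ) : ℝ :=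
  ∑' i, p i * log (1 / p i)

lemma mul_log_one_div_le_add_sub {x y : ℝ} (hx : 0 ≤ x) (hy : 0 < y) :
    x * log (1 / x) ≤ x * log (1 / y) + (y - x) := by
  have hratio : y * negMulLog (x / y) ≤ y * (1 - x / y) :=
    mul_le_mul_of_nonneg_left (negMulLog_le_one_sub_self (by positivity)) hy.le
  have hsplit : negMulLog x = x / y * negMulLog y + y * negMulLog (x / y) := by
    rw [← negMulLog_mul, mul_div_cancel₀ _ hy.ne']
  calc x * log (1 / x) = negMulLog x := by simp [negMulLog]
    _ ≤ x / y * negMulLog y + y * (1 - x / y) := by linarith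
    _ = x * log (1 / y) + (y - x) := by
      simp only [negMulLog, one_div, log_inv]
      field_simp

lemma summable_mul_log_one_div (hp : ∀ i, 0 ≤ p i) (hp1 : HasSum p 1) (hq : ∀ i, 0 < q i)
    (hqs : Summable q) (hcross : Summable fun i ↦ p i * log (1 / q i)) :
    Summable fun i ↦ p i * log (1 / p i) := by
  have hle (i : ι) : p i ≤ 1 := le_hasSum hp1 i fun j _ ↦ hp j
  refine .of_nonneg_of_le (fun i ↦ ?_) (fun i ↦ mul_log_one_div_le_add_sub (hp i) (hq i))
    (hcross.add (hqs.sub hp1.summable))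
  rw [one_div, log_inv]
  exact mul_nonneg (hp i) (neg_nonneg.2 (log_nonpos (hp i) (hle i)))

lemma shannonEntropy_lt_crossEntropy (hp : ∀ i, 0 ≤ p i) (hp1 : HasSum p 1) (hq : ∀ i, 0 < q i)
    (hqs : Summable q) (hq1 : ∑' i, q i < 1) {h : ℝ}
    (hcross : HasSum (fun i ↦ p i * log (1 / q i)) h) :
    shannonEntropy p < h := by
  have hle : shannonEntropy p ≤ h + (∑' i, q i - 1) :=
    hasSum_le (fun i ↦ mul_log_one_div_le_add_sub (hp i) (hq i))
      (summable_mul_log_one_div hp hp1 hq hqs hcross.summable).hasSum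
      (hcross.add (hqs.hasSum.sub hp1))
  linarith

end Gibbs

section GaussianDensity

variable {ι : Type*} {p x : ι → ℝ} {μ : ℝ} {v : ℝ≥0}

lemma log_one_div_gaussianPDFReal (μ : ℝ) (hv : v ≠ 0) (y : ℝ) :
    log (1 / gaussianPDFReal μ v y) = log (2 * π * v) / 2 + (y - μ) ^ 2 / (2 * v) := by
  rw [one_div, log_inv, gaussianPDFReal, log_mul (by positivity) (exp_pos _).ne', log_inv,
    log_sqrt (by positivity), log_exp]
  ring

lemma hasSum_mul_log_one_div_gaussianPDFReal (hv : v ≠ 0) (hp1 : HasSum p 1)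
    (hvar : HasSum (fun i ↦ (x i - μ) ^ 2 * p i) v) :
    HasSum (fun i ↦ p i * log (1 / gaussianPDFReal μ v (x i)))
      (1 / 2 * log (2 * π * exp 1 * v)) := by
  have hlog : 1 / 2 * log (2 * π * exp 1 * v) = log (2 * π * v) / 2 * 1 + 1 / (2 * v) * v := by
    rw [mul_right_comm, log_mul (by positivity) (exp_pos 1).ne', log_exp]
    field_simp
  rw [hlog]
  refine ((hp1.mul_left _).add (hvar.mul_left _)).congr_fun fun i ↦ ?_
  rw [log_one_div_gaussianPDFReal μ hv]
  ring

lemma shannonEntropy_lt_of_tsum_gaussianPDFReal_lt_one (hv : v ≠ 0) (hp : ∀ i, 0 ≤ p i)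
    (hp1 : HasSum p 1) (hvar : HasSum (fun i ↦ (x i - μ) ^ 2 * p i) v)
    (hsum : Summable fun i ↦ gaussianPDFReal μ v (x i))
    (hmass : ∑' i, gaussianPDFReal μ v (x i) < 1) :
    shannonEntropy p < 1 / 2 * log (2 * π * exp 1 * v) :=
  shannonEntropy_lt_crossEntropy hp hp1 (fun i ↦ gaussianPDFReal_pos μ v (x i) hv) hsum hmass
    (hasSum_mul_log_one_div_gaussianPDFReal hv hp1 hvar)

lemma gaussianPDFReal_le_of_abs_sub_le {ν y z : ℝ} (h : |z - ν| ≤ |y - μ|) :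
    gaussianPDFReal μ v y ≤ gaussianPDFReal ν v z := by
  simp only [gaussianPDFReal]
  gcongr _ * exp (-?_ / _)
  exact sq_le_sq.2 h

lemma eventually_mul_exp_lt_gaussianPDFReal {b c : ℝ} (hbc : c ^ 2 / 2 < b) (a K : ℝ) :
    ∀ᶠ v : ℝ≥0 in atTop, K * exp (-b * v) < gaussianPDFReal 0 v (c * v + a) := by
  have hlim : Tendsto (fun v : ℝ≥0 ↦ K * √(2 * π) * ((v : ℝ) ^ (1 / 2 : ℝ) *
      exp (-(b - c ^ 2 / 2) * v))) atTop (𝓝 0) := by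
    simpa using ((tendsto_rpow_mul_exp_neg_mul_atTop_nhds_zero (1 / 2) _ (sub_pos.2 hbc)).comp
      (NNReal.tendsto_coe_atTop.2 tendsto_id)).const_mul (K * √(2 * π))
  filter_upwards [hlim.eventually_lt_const (exp_pos (-(c * a + a ^ 2 / 2))),
    eventually_ge_atTop 1] with v hsmall hv
  have hv1 : (1 : ℝ) ≤ v := by exact_mod_cast hv
  have hexponent : (c * v + a - 0) ^ 2 / (2 * v) ≤ c ^ 2 / 2 * v + (c * a + a ^ 2 / 2) := by
    rw [div_le_iff₀ (by positivity)]
    nlinarith [mul_nonneg (sq_nonneg a) (sub_nonneg.2 hv1)]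
  rw [gaussianPDFReal, lt_inv_mul_iff₀ (by positivity)]
  calc √(2 * π * v) * (K * exp (-b * v))
      = exp (-(c ^ 2 / 2 * v)) *
          (K * √(2 * π) * ((v : ℝ) ^ (1 / 2 : ℝ) * exp (-(b - c ^ 2 / 2) * v))) := by
        rw [show -b * (v : ℝ) = -(c ^ 2 / 2 * v) + -(b - c ^ 2 / 2) * v by ring, exp_add,
          sqrt_mul (by positivity), sqrt_eq_rpow (v : ℝ)]
        ring
    _ < exp (-(c ^ 2 / 2 * v)) * exp (-(c * a + a ^ 2 / 2)) := by gcongr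
    _ = exp (-(c ^ 2 / 2 * v + (c * a + a ^ 2 / 2))) := by rw [← exp_add, ← neg_add]
    _ ≤ exp (-(c * v + a - 0) ^ 2 / (2 * v)) := by
        rw [neg_div]
        gcongr

end GaussianDensity

section ThetaSeries

lemma cosKernel_le_cosKernel_zero (a : ℝ) {s : ℝ} (hs : 0 < s) :
    cosKernel a s ≤ cosKernel (0 : ℝ) s := by
  refine (sub_le_sub_iff_right 1).1 (hasSum_le (fun n ↦ ?_) (hasSum_nat_cosKernel₀ a hs)
    (hasSum_nat_cosKernel₀ 0 hs))
  gcongr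
  simpa using cos_le_one _

lemma cosKernel_le_one_add {s : ℝ} (hs : 0 < s) (a : ℝ) :
    cosKernel a s ≤ 1 + 2 / (1 - exp (-π * s)) * exp (-π * s) := by
  have htheta : jacobiTheta (Complex.I * s) = (cosKernel (0 : ℝ) s : ℝ) := by
    rw [cosKernel_def, jacobiTheta_eq_jacobiTheta₂, Complex.ofReal_zero]
  have hnorm := norm_jacobiTheta_sub_one_le (τ := Complex.I * s) (by simpa using hs)
  rw [htheta, ← Complex.ofReal_one, ← Complex.ofReal_sub, Complex.norm_real] at hnorm
  have him : (Complex.I * s).im = s := by simp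
  rw [him] at hnorm
  linarith [le_norm_self (cosKernel (0 : ℝ) s - 1), cosKernel_le_cosKernel_zero a hs]

lemma cosKernel_le_one_add_four_mul_exp {s : ℝ} (hs : 1 ≤ π * s) (a : ℝ) :
    cosKernel a s ≤ 1 + 4 * exp (-π * s) := by
  have hs0 : 0 < s := pos_of_mul_pos_right (one_pos.trans_le hs) pi_pos.le
  have hhalf : exp (-π * s) ≤ 1 / 2 := by
    rw [neg_mul, exp_neg, one_div]
    gcongr
    linarith [add_one_le_exp (π * s)]
  refine (cosKernel_le_one_add hs0 a).trans ?_
  gcongr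
  rw [div_le_iff₀ (by linarith)]
  linarith

end ThetaSeries

lemma add_tsum_comp_le_tsum {α β : Type*} {f : β → ℝ} (hf : Summable f) (hf0 : ∀ b, 0 ≤ f b)
    {i : α → β} (hi : i.Injective) {b : β} (hb : b ∉ Set.range i) :
    f b + ∑' a, f (i a) ≤ ∑' b', f b' := by
  classical
  have hoff : Summable fun b' ↦ if b' = b then 0 else f b' :=
    (hasSum_ite_sub_hasSum hf.hasSum b).summable
  have hcomp (a : α) : f (i a) = if i a = b then 0 else f (i a) :=
    (if_neg fun h ↦ hb ⟨a, h⟩).symm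
  rw [hf.tsum_eq_add_tsum_ite b, tsum_congr hcomp]
  gcongr
  exact tsum_comp_le_tsum_of_inj hoff (fun b' ↦ ite_nonneg le_rfl (hf0 b')) hi

section GaussianMass

variable {v : ℝ≥0}

lemma hasSum_int_gaussianPDFReal (μ : ℝ) (hv : v ≠ 0) :
    HasSum (fun n : ℤ ↦ gaussianPDFReal μ v n) (cosKernel μ (2 * π * v)) := by
  have hs : (0 : ℝ) < 2 * π * v := by positivity
  have hpoisson : cosKernel μ (2 * π * v) =
      (√(2 * π * v))⁻¹ * evenKernel ((-μ : ℝ) : UnitAddCircle) (1 / (2 * π * v)) := by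
    rw [evenKernel_functional_equation, one_div_one_div, ← sqrt_eq_rpow, one_div (2 * π * v : ℝ),
      sqrt_inv, one_div, inv_inv, inv_mul_cancel_left₀ (by positivity), AddCircle.coe_neg,
      cosKernel_neg]
  rw [hpoisson]
  refine ((hasSum_int_evenKernel (-μ) (one_div_pos.2 hs)).mul_left _).congr_fun fun n ↦ ?_
  rw [gaussianPDFReal]
  congr 2
  field_simp
  ring

lemma tsum_nat_gaussianPDFReal_le (μ : ℝ) (hv : 1 ≤ v) :
    ∑' n : ℕ, gaussianPDFReal μ v n ≤
      1 + 4 * exp (-(2 * π ^ 2) * v) - gaussianPDFReal μ v (-1) := by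
  have hv1 : (1 : ℝ) ≤ v := by exact_mod_cast hv
  have hint := hasSum_int_gaussianPDFReal μ (one_pos.trans_le hv).ne'
  have hmiss := add_tsum_comp_le_tsum hint.summable (fun n ↦ gaussianPDFReal_nonneg μ v n)
    Nat.cast_injective (b := -1) (by simp)
  have hπ : 1 ≤ π := by linarith [pi_gt_three]
  have hs : 1 ≤ π * (2 * π * v) := by
    nlinarith [one_le_mul_of_one_le_of_one_le hπ hv1]
  have htheta := cosKernel_le_one_add_four_mul_exp hs μ
  rw [hint.tsum_eq] at hmiss
  rw [show -π * (2 * π * v) = -(2 * π ^ 2) * v by ring] at htheta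
  push_cast at hmiss
  linarith

lemma summable_nat_gaussianPDFReal (μ : ℝ) (hv : v ≠ 0) :
    Summable fun n : ℕ ↦ gaussianPDFReal μ v n := by
  simpa [Function.comp_def] using
    (hasSum_int_gaussianPDFReal μ hv).summable.comp_injective Nat.cast_injective

lemma eventually_tsum_nat_gaussianPDFReal_lt_one {c : ℝ} (hc0 : 0 ≤ c) (hc : c < 2 * π) :
    ∀ᶠ v : ℝ≥0 in atTop, ∀ μ : ℝ, |μ| ≤ c * v → ∑' n : ℕ, gaussianPDFReal μ v n < 1 := by
  have hexponent : c ^ 2 / 2 < 2 * π ^ 2 := by nlinarith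
  filter_upwards [eventually_mul_exp_lt_gaussianPDFReal hexponent 1 4, eventually_ge_atTop 1]
    with v hexcess hv μ hμ
  have hfarthest : gaussianPDFReal 0 v (c * v + 1) ≤ gaussianPDFReal μ v (-1) := by
    apply gaussianPDFReal_le_of_abs_sub_le
    calc |-1 - μ| ≤ |(-1 : ℝ)| + |μ| := abs_sub _ _
      _ ≤ c * v + 1 := by
        rw [abs_neg, abs_one]
        linarith
      _ ≤ |c * v + 1 - 0| := by
        rw [sub_zero]
        exact le_abs_self _
  linarith [tsum_nat_gaussianPDFReal_le μ hv]

end GaussianMass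

/-- For every constant `c < 2π` there is `σ₀ > 0` such that every random variable `X`
taking values in the nonnegative integers with finite mean `μ` and finite variance `σ²`
satisfying `μ ≤ cσ²` and `σ² ≥ σ₀` has `H(X) < (1/2) ln(2πeσ²)`. -/
theorem entropy_lt_gaussian_entropy
    (c : ℝ) (hc : c < 2 * π) :
    ∃ σ₀ > (0 : ℝ), ∀ (p : ℕ → ℝ), (∀ n, 0 ≤ p n) → (∑' n, p n) = 1 →
      ∀ μ σ2 : ℝ, μ = ∑' n : ℕ, (n : ℝ) * p n →
        Summable (fun n : ℕ => (n : ℝ) * p n) →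
        σ2 = ∑' n : ℕ, ((n : ℝ) - μ) ^ 2 * p n →
        Summable (fun n : ℕ => ((n : ℝ) - μ) ^ 2 * p n) →
        μ ≤ c * σ2 → σ₀ ≤ σ2 →
        (∑' n, p n * Real.log (1 / p n)) <
          (1 / 2) * Real.log (2 * π * Real.exp 1 * σ2) := by
  -- The estimates square `c`, so a negative `c` is first replaced by `0`.
  obtain ⟨N, hN⟩ := eventually_atTop.1
    (eventually_tsum_nat_gaussianPDFReal_lt_one (le_max_right c 0) (max_lt hc two_pi_pos))
  refine ⟨N + 1, by positivity, fun p hp hp1 μ σ2 hμ _ hvar hvars hmean hσ ↦ ?_⟩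
  lift σ2 to ℝ≥0 using by linarith [N.coe_nonneg]
  have hσ0 : σ2 ≠ 0 := by
    rintro rfl
    exact absurd hσ (by push_cast; linarith [N.coe_nonneg])
  have hμ0 : 0 ≤ μ := hμ ▸ tsum_nonneg fun n ↦ mul_nonneg n.cast_nonneg (hp n)
  have hμc : |μ| ≤ max c 0 * σ2 := by
    rw [abs_of_nonneg hμ0]
    exact hmean.trans (by gcongr; exact le_max_left c 0)
  have hps : Summable p := by
    by_contra h
    simp [tsum_eq_zero_of_not_summable h] at hp1
  exact shannonEntropy_lt_of_tsum_gaussianPDFReal_lt_one hσ0 hp (hps.hasSum_iff.2 hp1)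
    (hvars.hasSum_iff.2 hvar.symm) (summable_nat_gaussianPDFReal μ hσ0)
    (hN σ2 (by exact_mod_cast (le_add_of_nonneg_right zero_le_one).trans hσ) μ hμc)
end

section
/- Let α > 1/2, α ≠ 1, and let X be a discrete random variable taking countably many values with finite guessing entropy G(X). Then G(X) > ((2α−1)/α)^{α/(1−α)} · e^{H_α(X)} + 1/2; equivalently, G(X) > e^{H_α(X)} / (1 + (α−1)/α)^{α/(α−1)} + 1/2. -/
open MeasureTheory Real

/-!
Spread the mass `p n` uniformly over `[n, n + 1)`. The resulting density on the half-line has the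
same `α`-power integral as `p`, and its mean is `m = G - 1 / 2`. Among densities on the half-line
with mean `m`, the Rényi entropy is maximized by a power of an affine function, `1 + x / b` if
`α < 1` and the positive part of `1 - x / b` if `α > 1`, and Hölder's inequality against that
affine function proves it. In the discrete form of this inequality the integral of the maximizer
is replaced by its midpoint sum over the unit cells, which is strictly smaller by convexity.
-/

open Set Filter Topology

section MidpointRule

variable {f : ℝ → ℝ} {a b : ℝ}

lemma intervalIntegrable_comp_reflect (hf : IntervalIntegrable f volume a b) :
    IntervalIntegrable (fun x => f (a + b - x)) volume a b := by
  simpa using (hf.comp_sub_left (a + b)).symm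

lemma integral_average_reflect (hf : IntervalIntegrable f volume a b) :
    ∫ x in a..b, (f x + f (a + b - x)) / 2 = ∫ x in a..b, f x := by
  rw [intervalIntegral.integral_div,
    intervalIntegral.integral_add hf (intervalIntegrable_comp_reflect hf),
    intervalIntegral.integral_comp_sub_left]
  simp

-- Averaging `f` with its reflection keeps the integral and makes the midpoint rule pointwise.
lemma map_midpoint_le_average (hf : ConvexOn ℝ (Icc a b) f) {x : ℝ} (hx : x ∈ Icc a b) :
    f ((a + b) / 2) ≤ (f x + f (a + b - x)) / 2 := by
  have hx' : a + b - x ∈ Icc a b := ⟨by linarith [hx.2], by linarith [hx.1]⟩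
  have h := hf.2 hx hx' (by norm_num : (0 : ℝ) ≤ 1 / 2) (by norm_num : (0 : ℝ) ≤ 1 / 2)
    (by norm_num)
  have hmid : 1 / 2 * x + 1 / 2 * (a + b - x) = (a + b) / 2 := by ring
  simp only [smul_eq_mul, hmid] at h
  linarith

lemma mul_midpoint_le_integral (hab : a ≤ b) (hf : ConvexOn ℝ (Icc a b) f)
    (hfi : IntervalIntegrable f volume a b) :
    (b - a) * f ((a + b) / 2) ≤ ∫ x in a..b, f x := by
  calc (b - a) * f ((a + b) / 2) = ∫ _ in a..b, f ((a + b) / 2) := by simp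
    _ ≤ ∫ x in a..b, (f x + f (a + b - x)) / 2 :=
      intervalIntegral.integral_mono_on hab (by simp)
        ((hfi.add (intervalIntegrable_comp_reflect hfi)).div_const 2)
        fun _ hx => map_midpoint_le_average hf hx
    _ = ∫ x in a..b, f x := integral_average_reflect hfi

lemma mul_midpoint_lt_integral (hab : a < b) (hf : StrictConvexOn ℝ (Icc a b) f)
    (hfc : ContinuousOn f (Icc a b)) :
    (b - a) * f ((a + b) / 2) < ∫ x in a..b, f x := by
  have hreflect : ContinuousOn (fun x => f (a + b - x)) (Icc a b) :=
    hfc.comp (by fun_prop) fun x hx => ⟨by linarith [hx.2], by linarith [hx.1]⟩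
  have hlt : f ((a + b) / 2) < (f a + f (a + b - a)) / 2 := by
    have h := hf.2 (left_mem_Icc.2 hab.le) (right_mem_Icc.2 hab.le) hab.ne
      (by norm_num : (0 : ℝ) < 1 / 2) (by norm_num : (0 : ℝ) < 1 / 2) (by norm_num)
    have hmid : 1 / 2 * a + 1 / 2 * b = (a + b) / 2 := by ring
    simp only [smul_eq_mul, hmid] at h
    rw [add_sub_cancel_left]
    linarith
  calc (b - a) * f ((a + b) / 2) = ∫ _ in a..b, f ((a + b) / 2) := by simp
    _ < ∫ x in a..b, (f x + f (a + b - x)) / 2 :=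
      intervalIntegral.integral_lt_integral_of_continuousOn_of_le_of_exists_lt hab
        continuousOn_const ((hfc.add hreflect).div_const 2)
        (fun _ hx => map_midpoint_le_average hf.convexOn (Ioc_subset_Icc_self hx))
        ⟨a, left_mem_Icc.2 hab.le, hlt⟩
    _ = ∫ x in a..b, f x := integral_average_reflect (hfc.intervalIntegrable_of_Icc hab.le)

lemma hasSum_integral_unit_intervals (hf0 : ∀ x, 0 ≤ x → 0 ≤ f x) (hfi : IntegrableOn f (Ioi 0)) :
    HasSum (fun n : ℕ => ∫ x in (n : ℝ)..(n + 1 : ℕ), f x) (∫ x in Ioi 0, f x) := by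
  have hint : ∀ n : ℕ, IntervalIntegrable f volume (n : ℝ) (n + 1 : ℕ) := fun n =>
    (intervalIntegrable_iff_integrableOn_Ioc_of_le (by simp)).2
      (hfi.mono_set fun x hx => n.cast_nonneg.trans_lt hx.1)
  refine (hasSum_iff_tendsto_nat_of_nonneg (fun n => ?_) _).2 ?_
  · exact intervalIntegral.integral_nonneg (by simp) fun x hx => hf0 x (n.cast_nonneg.trans hx.1)
  · simp_rw [intervalIntegral.sum_integral_adjacent_intervals fun k _ => hint k, Nat.cast_zero]
    exact intervalIntegral_tendsto_integral_Ioi 0 hfi tendsto_natCast_atTop_atTop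

lemma summable_midpoint_and_tsum_lt_integral_Ioi (hf0 : ∀ x, 0 ≤ x → 0 ≤ f x)
    (hfi : IntegrableOn f (Ioi 0)) (hf : ConvexOn ℝ (Ici 0) f)
    (hf' : StrictConvexOn ℝ (Icc 0 1) f) (hfc : ContinuousOn f (Icc 0 1)) :
    Summable (fun n : ℕ => f (n + 1 / 2)) ∧ ∑' n : ℕ, f (n + 1 / 2) < ∫ x in Ioi 0, f x := by
  have hI := hasSum_integral_unit_intervals hf0 hfi
  have hle : ∀ n : ℕ, f (n + 1 / 2) ≤ ∫ x in (n : ℝ)..(n + 1 : ℕ), f x := fun n => by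
    have hsub : Icc (n : ℝ) (n + 1 : ℕ) ⊆ Ici 0 := fun x hx => n.cast_nonneg.trans hx.1
    convert mul_midpoint_le_integral (by simp) (hf.subset hsub (convex_Icc _ _))
      ((intervalIntegrable_iff_integrableOn_Ioc_of_le (by simp)).2
        (hfi.mono_set fun x hx => n.cast_nonneg.trans_lt hx.1)) using 1
    push_cast
    ring_nf
  have hlt : f ((0 : ℕ) + 1 / 2) < ∫ x in ((0 : ℕ) : ℝ)..(0 + 1 : ℕ), f x := by
    simpa using mul_midpoint_lt_integral one_pos hf' hfc
  have hsum : Summable fun n : ℕ => f (n + 1 / 2) :=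
    hI.summable.of_nonneg_of_le (fun n => hf0 _ (by positivity)) hle
  exact ⟨hsum, hasSum_lt hle hlt hsum.hasSum hI⟩

end MidpointRule

section PowerDensities

variable {b e : ℝ}

lemma strictConvexOn_rpow_of_neg (he : e < 0) : StrictConvexOn ℝ (Ioi 0) fun x : ℝ => x ^ e := by
  refine StrictMonoOn.strictConvexOn_of_deriv (convex_Ioi 0)
    (continuousOn_id.rpow_const fun x hx => .inl (ne_of_gt hx)) ?_
  rw [interior_Ioi]
  intro x hx y _ hxy
  rw [Real.deriv_rpow_const, Real.deriv_rpow_const]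
  exact mul_lt_mul_of_neg_left (rpow_lt_rpow_of_neg hx hxy (by linarith)) he

lemma strictConvexOn_comp_add_div {f : ℝ → ℝ} {s : Set ℝ} (hf : StrictConvexOn ℝ s f) (a : ℝ)
    (hb : b ≠ 0) : StrictConvexOn ℝ ((fun x => a + x / b) ⁻¹' s) fun x => f (a + x / b) := by
  have hcombo : ∀ x y u v : ℝ, u + v = 1 →
      a + (u * x + v * y) / b = u * (a + x / b) + v * (a + y / b) := fun x y u v huv => by
    linear_combination -a * huv
  refine ⟨fun x hx y hy u v hu hv huv => ?_, fun x hx y hy hxy u v hu hv huv => ?_⟩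
  · simpa [hcombo x y u v huv] using hf.1 hx hy hu hv huv
  · have hne : a + x / b ≠ a + y / b := by simpa [div_left_inj' hb] using hxy
    simpa [hcombo x y u v huv] using hf.2 hx hy hne hu hv huv

lemma strictConvexOn_one_add_div_rpow (hb : 0 < b) (he : e < 0) :
    StrictConvexOn ℝ (Ici 0) fun x => (1 + x / b) ^ e :=
  (strictConvexOn_comp_add_div (strictConvexOn_rpow_of_neg he) 1 hb.ne').subset
    (fun _ hx => add_pos_of_pos_of_nonneg one_pos (div_nonneg hx hb.le)) (convex_Ici 0)

lemma hasDerivAt_one_add_div_rpow (hb : 0 < b) (he : e < -1) {x : ℝ} (hx : 0 ≤ x) :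
    HasDerivAt (fun x => b / (e + 1) * (1 + x / b) ^ (e + 1)) ((1 + x / b) ^ e) x := by
  have hpos : 0 < 1 + x / b := by positivity
  have he' : e + 1 ≠ 0 := by linarith
  refine (((((hasDerivAt_id x).div_const b).const_add 1).rpow_const
    (p := e + 1) (.inl hpos.ne')).const_mul (b / (e + 1))).congr_deriv ?_
  rw [add_sub_cancel_right, id]
  field_simp

lemma tendsto_one_add_div_rpow (hb : 0 < b) (he : e < -1) :
    Tendsto (fun x => b / (e + 1) * (1 + x / b) ^ (e + 1)) atTop (𝓝 0) := by
  have hbase : Tendsto (fun x => 1 + x / b) atTop atTop :=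
    tendsto_atTop_add_const_left _ _ (tendsto_id.atTop_div_const hb)
  simpa using ((tendsto_rpow_neg_atTop (by linarith : 0 < -(e + 1))).comp hbase).const_mul
    (b / (e + 1))

lemma integrableOn_one_add_div_rpow (hb : 0 < b) (he : e < -1) :
    IntegrableOn (fun x => (1 + x / b) ^ e) (Ioi 0) :=
  integrableOn_Ioi_deriv_of_nonneg' (fun _ hx => hasDerivAt_one_add_div_rpow hb he hx)
    (fun x hx => by have : 0 < x := hx; positivity) (tendsto_one_add_div_rpow hb he)

lemma integral_one_add_div_rpow (hb : 0 < b) (he : e < -1) :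
    ∫ x in Ioi 0, (1 + x / b) ^ e = -b / (e + 1) := by
  rw [integral_Ioi_of_hasDerivAt_of_tendsto' (fun _ hx => hasDerivAt_one_add_div_rpow hb he hx)
    (integrableOn_one_add_div_rpow hb he) (tendsto_one_add_div_rpow hb he)]
  simp [neg_div]

lemma summable_one_add_midpoint_div_rpow_and_tsum_lt (hb : 0 < b) (he : e < -1) :
    Summable (fun n : ℕ => (1 + ((n : ℝ) + 1 / 2) / b) ^ e) ∧
      ∑' n : ℕ, (1 + ((n : ℝ) + 1 / 2) / b) ^ e < -b / (e + 1) := by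
  have hconv := strictConvexOn_one_add_div_rpow hb (by linarith : e < 0)
  rw [← integral_one_add_div_rpow hb he]
  exact summable_midpoint_and_tsum_lt_integral_Ioi (f := fun x => (1 + x / b) ^ e)
    (fun x hx => by positivity) (integrableOn_one_add_div_rpow hb he) hconv.convexOn
    (hconv.subset Icc_subset_Ici_self (convex_Icc 0 1))
    (ContinuousOn.rpow_const (by fun_prop) fun x hx => .inl (by have := hx.1; positivity))

lemma continuous_max_one_sub_div_rpow (b : ℝ) (he : 0 ≤ e) :
    Continuous fun x => max (1 - x / b) 0 ^ e :=
  Continuous.rpow_const (by fun_prop) fun _ => .inr he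

lemma convexOn_comp_rpow {E : Type*} [AddCommGroup E] [Module ℝ E] {s : Set E} {f : E → ℝ}
    (hf : ConvexOn ℝ s f) (hf0 : ∀ x ∈ s, 0 ≤ f x) (he : 1 ≤ e) :
    ConvexOn ℝ s fun x => f x ^ e := by
  refine ⟨hf.1, fun x hx y hy u v hu hv huv => ?_⟩
  calc f (u • x + v • y) ^ e
      ≤ (u • f x + v • f y) ^ e :=
        rpow_le_rpow (hf0 _ (hf.1 hx hy hu hv huv)) (hf.2 hx hy hu hv huv) (by linarith)
    _ ≤ u • f x ^ e + v • f y ^ e := (convexOn_rpow he).2 (hf0 x hx) (hf0 y hy) hu hv huv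

lemma convexOn_max_one_sub_div_rpow (b : ℝ) (he : 1 ≤ e) :
    ConvexOn ℝ univ fun x => max (1 - x / b) 0 ^ e := by
  have haffine : ConvexOn ℝ univ fun x : ℝ => 1 - x / b :=
    ⟨convex_univ, fun x _ y _ u v _ _ huv => by
      simp only [smul_eq_mul]
      linear_combination -huv⟩
  exact convexOn_comp_rpow (haffine.sup (convexOn_const 0 convex_univ))
    (fun _ _ => le_max_right _ _) he

lemma strictConvexOn_max_one_sub_div_rpow (hb : 0 < b) (he : 1 < e) :
    StrictConvexOn ℝ (Icc 0 b) fun x => max (1 - x / b) 0 ^ e := by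
  have hnonneg : ∀ x ∈ Icc 0 b, 0 ≤ 1 - x / b := fun x hx => sub_nonneg.2 ((div_le_one hb).2 hx.2)
  have hconv : StrictConvexOn ℝ (Icc 0 b) fun x => (1 - x / b) ^ e := by
    simpa only [div_neg, ← sub_eq_add_neg] using
      (strictConvexOn_comp_add_div (strictConvexOn_rpow he) 1 (neg_ne_zero.2 hb.ne')).subset
        (fun x hx => by simpa [div_neg, ← sub_eq_add_neg] using hnonneg x hx) (convex_Icc 0 b)
  exact hconv.congr fun x hx => by simp only [max_eq_left (hnonneg x hx)]

lemma max_one_sub_div_rpow_eq_zero (hb : 0 < b) (he : e ≠ 0) {x : ℝ} (hx : b ≤ x) :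
    max (1 - x / b) 0 ^ e = 0 := by
  rw [max_eq_right (sub_nonpos.2 ((one_le_div hb).2 hx)), zero_rpow he]

lemma integrableOn_max_one_sub_div_rpow (hb : 0 < b) (he : 0 < e) :
    IntegrableOn (fun x => max (1 - x / b) 0 ^ e) (Ioi 0) := by
  rw [← Ioc_union_Ioi_eq_Ioi hb.le]
  refine ((continuous_max_one_sub_div_rpow b he.le).integrableOn_Ioc).union ?_
  exact integrableOn_zero.congr_fun
    (fun x hx => (max_one_sub_div_rpow_eq_zero hb he.ne' (mem_Ioi.1 hx).le).symm) measurableSet_Ioi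

lemma integral_max_one_sub_div_rpow (hb : 0 < b) (he : 0 < e) :
    ∫ x in Ioi 0, max (1 - x / b) 0 ^ e = b / (e + 1) := by
  calc ∫ x in Ioi 0, max (1 - x / b) 0 ^ e
      = ∫ x in Ioc 0 b, max (1 - x / b) 0 ^ e :=
        (setIntegral_eq_of_subset_of_forall_sdiff_eq_zero measurableSet_Ioi Ioc_subset_Ioi_self
          fun x hx => max_one_sub_div_rpow_eq_zero hb he.ne' (by
            by_contra! h
            exact hx.2 ⟨hx.1, h.le⟩))
    _ = ∫ x in (0)..b, (1 - x / b) ^ e := by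
        rw [← intervalIntegral.integral_of_le hb.le]
        refine intervalIntegral.integral_congr fun x hx => ?_
        rw [uIcc_of_le hb.le] at hx
        simp only [max_eq_left (sub_nonneg.2 ((div_le_one hb).2 hx.2))]
    _ = b / (e + 1) := by
        rw [intervalIntegral.integral_comp_sub_div (fun y => y ^ e) hb.ne' 1, div_self hb.ne',
          sub_self, zero_div, sub_zero, integral_rpow (.inl (by linarith)), one_rpow,
          zero_rpow (by linarith), sub_zero, smul_eq_mul, mul_one_div]

lemma summable_max_one_sub_midpoint_div_rpow_and_tsum_lt (hb : 1 ≤ b) (he : 1 < e) :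
    Summable (fun n : ℕ => max (1 - ((n : ℝ) + 1 / 2) / b) 0 ^ e) ∧
      ∑' n : ℕ, max (1 - ((n : ℝ) + 1 / 2) / b) 0 ^ e < b / (e + 1) := by
  have hb0 : 0 < b := by linarith
  have he0 : 0 < e := by linarith
  rw [← integral_max_one_sub_div_rpow hb0 he0]
  exact summable_midpoint_and_tsum_lt_integral_Ioi
    (f := fun x => max (1 - x / b) 0 ^ e) (fun _ _ => rpow_nonneg (le_max_right _ _) _)
    (integrableOn_max_one_sub_div_rpow hb0 he0)
    ((convexOn_max_one_sub_div_rpow b he.le).subset (subset_univ _) (convex_Ici 0))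
    ((strictConvexOn_max_one_sub_div_rpow hb0 he).subset (Icc_subset_Icc_right hb)
      (convex_Icc 0 1))
    (continuous_max_one_sub_div_rpow b he0.le).continuousOn

end PowerDensities

section Hoelder

variable {ι : Type*} {α : ℝ} {p w : ι → ℝ}

lemma rpow_div_one_sub {x : ℝ} (hx : 0 ≤ x) (α : ℝ) :
    x ^ (α / (1 - α)) = x⁻¹ ^ (α / (α - 1)) := by
  rw [← neg_sub, div_neg, rpow_neg hx, inv_rpow hx]

lemma summable_rpow_and_rpow_tsum_le_of_lt_one (hα : 0 < α) (hα1 : α < 1) (hp : ∀ i, 0 ≤ p i)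
    (hw : ∀ i, 0 < w i) (hpw : Summable fun i => p i * w i)
    (hws : Summable fun i => w i ^ (α / (α - 1))) :
    Summable (fun i => p i ^ α) ∧ (∑' i, p i ^ α) ^ (1 / (1 - α)) ≤
      (∑' i, p i * w i) ^ (α / (1 - α)) * ∑' i, w i ^ (α / (α - 1)) := by
  have h1α : 0 < 1 - α := sub_pos.2 hα1
  -- Hölder applied to the factorization `p ^ α = (p * w) ^ α * w⁻¹ ^ α`.
  have htriple : HolderTriple 1 (α / (1 - α)) α :=
    ⟨by field_simp; ring, one_pos, div_pos hα h1α⟩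
  have hinv : ∀ i, (w i)⁻¹ ^ (α / (1 - α)) = w i ^ (α / (α - 1)) := fun i => by
    rw [rpow_div_one_sub (inv_pos.2 (hw i)).le, inv_inv]
  have hcancel : ∀ i, p i * w i * (w i)⁻¹ = p i := fun i => mul_inv_cancel_right₀ (hw i).ne' _
  have hholder := summable_and_Lr_rpow_le_Lp_mul_Lq_tsum_of_nonneg htriple
    (fun i => mul_nonneg (hp i) (hw i).le) (fun i => (inv_pos.2 (hw i)).le)
    (by simpa only [rpow_one] using hpw) (by simpa only [hinv] using hws)
  simp only [hinv, hcancel, rpow_one, div_one, div_div_cancel₀ hα.ne'] at hholder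
  have hpw0 : 0 ≤ ∑' i, p i * w i := tsum_nonneg fun i => mul_nonneg (hp i) (hw i).le
  have hw0 : 0 ≤ ∑' i, w i ^ (α / (α - 1)) := tsum_nonneg fun i => rpow_nonneg (hw i).le _
  refine ⟨hholder.1, ?_⟩
  calc (∑' i, p i ^ α) ^ (1 / (1 - α))
      ≤ ((∑' i, p i * w i) ^ α * (∑' i, w i ^ (α / (α - 1))) ^ (1 - α)) ^ (1 / (1 - α)) :=
        rpow_le_rpow (tsum_nonneg fun i => rpow_nonneg (hp i) _) hholder.2 (by positivity)
    _ = _ := by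
        rw [mul_rpow (rpow_nonneg hpw0 _) (rpow_nonneg hw0 _), ← rpow_mul hpw0, ← rpow_mul hw0,
          mul_one_div, mul_one_div_cancel h1α.ne', rpow_one]

lemma rpow_tsum_mul_le_of_one_lt (hα : 1 < α) (hp : ∀ i, 0 ≤ p i)
    (hw : ∀ i, 0 ≤ w i) (hps : Summable fun i => p i ^ α)
    (hws : Summable fun i => w i ^ (α / (α - 1))) :
    Summable (fun i => p i * w i) ∧ (∑' i, p i * w i) ^ (α / (α - 1)) ≤
      (∑' i, p i ^ α) ^ (1 / (α - 1)) * ∑' i, w i ^ (α / (α - 1)) := by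
  have hα0 : 0 < α := by linarith
  have hα1 : 0 < α - 1 := sub_pos.2 hα
  obtain ⟨hsum, hle⟩ := summable_and_inner_le_Lp_mul_Lq_tsum_of_nonneg
    (HolderConjugate.conjExponent hα) hp hw hps hws
  rw [conjExponent] at hle
  have hp0 : 0 ≤ ∑' i, p i ^ α := tsum_nonneg fun i => rpow_nonneg (hp i) _
  have hw0 : 0 ≤ ∑' i, w i ^ (α / (α - 1)) := tsum_nonneg fun i => rpow_nonneg (hw i) _
  refine ⟨hsum, ?_⟩
  calc (∑' i, p i * w i) ^ (α / (α - 1))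
      ≤ ((∑' i, p i ^ α) ^ (1 / α) * (∑' i, w i ^ (α / (α - 1))) ^ (1 / (α / (α - 1)))) ^
          (α / (α - 1)) :=
        rpow_le_rpow (tsum_nonneg fun i => mul_nonneg (hp i) (hw i)) hle (div_pos hα0 hα1).le
    _ = _ := by
        rw [mul_rpow (rpow_nonneg hp0 _) (rpow_nonneg hw0 _), ← rpow_mul hp0, ← rpow_mul hw0,
          one_div_mul_cancel (by positivity), rpow_one]
        congr 2
        field_simp

end Hoelder

section MaximumEntropy

/-- The Rényi entropy of order `α` of a family of weights `p`, in nats. For `α < 1` it is the junk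
value `0` when `∑ p i ^ α` diverges, in place of `∞`. -/
noncomputable def renyiEntropy {ι : Type*} (α : ℝ) (p : ι → ℝ) : ℝ :=
  1 / (1 - α) * log (∑' i, p i ^ α)

variable {α m : ℝ} {p : ℕ → ℝ}

lemma exp_renyiEntropy {ι : Type*} {p : ι → ℝ} (hp0 : ∀ i, 0 ≤ p i) (hne : p ≠ 0)
    (hsum : Summable fun i => p i ^ α) :
    exp (renyiEntropy α p) = (∑' i, p i ^ α) ^ (1 / (1 - α)) := by
  obtain ⟨i, hi⟩ := Function.ne_iff.1 hne
  have hpos : 0 < ∑' i, p i ^ α :=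
    hsum.tsum_pos (fun j => rpow_nonneg (hp0 j) _) i (rpow_pos_of_pos ((hp0 i).lt_of_ne' hi) _)
  rw [renyiEntropy, rpow_def_of_pos hpos, mul_comm]

lemma ne_zero_of_hasSum_one {ι : Type*} {p : ι → ℝ} (hp : HasSum p 1) : p ≠ 0 := by
  rintro rfl
  exact one_ne_zero (hp.unique hasSum_zero)

lemma summable_rpow_of_one_le {ι : Type*} {p : ι → ℝ} (hα : 1 ≤ α) (hp0 : ∀ i, 0 ≤ p i)
    (hp : HasSum p 1) : Summable fun i => p i ^ α :=
  hp.summable.of_nonneg_of_le (fun i => rpow_nonneg (hp0 i) _) fun i =>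
    rpow_le_self_of_le_one (hp0 i) (le_hasSum hp i fun j _ => hp0 j) hα

lemma rpow_mul_exp_renyiEntropy_le_of_lt_one {ι : Type*} {p w : ι → ℝ} {c : ℝ} (hα : 0 < α)
    (hα1 : α < 1) (hp0 : ∀ i, 0 ≤ p i) (hne : p ≠ 0) (hw : ∀ i, 0 < w i)
    (hpw : HasSum (fun i => p i * w i) c) (hws : Summable fun i => w i ^ (α / (α - 1))) :
    c ^ (α / (α - 1)) * exp (renyiEntropy α p) ≤ ∑' i, w i ^ (α / (α - 1)) := by
  obtain ⟨hsum, hle⟩ :=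
    summable_rpow_and_rpow_tsum_le_of_lt_one hα hα1 hp0 hw hpw.summable hws
  have hc : 0 ≤ c := hpw.nonneg fun i => mul_nonneg (hp0 i) (hw i).le
  have hinv : c ^ (α / (α - 1)) = (c ^ (α / (1 - α)))⁻¹ := by
    rw [← inv_rpow hc, rpow_div_one_sub (inv_nonneg.2 hc), inv_inv]
  rw [hpw.tsum_eq] at hle
  rw [exp_renyiEntropy hp0 hne hsum, hinv]
  exact inv_mul_le_of_le_mul₀ (rpow_nonneg hc _)
    (tsum_nonneg fun i => rpow_nonneg (hw i).le _) hle

lemma rpow_mul_exp_renyiEntropy_le_of_one_lt {ι : Type*} {p w : ι → ℝ} {c : ℝ} (hα : 1 < α)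
    (hp0 : ∀ i, 0 ≤ p i) (hp : HasSum p 1) (hc : 0 ≤ c)
    (hpw : HasSum (fun i => p i * w i) c)
    (hws : Summable fun i => max (w i) 0 ^ (α / (α - 1))) :
    c ^ (α / (α - 1)) * exp (renyiEntropy α p) ≤ ∑' i, max (w i) 0 ^ (α / (α - 1)) := by
  have hexp : 0 ≤ α / (α - 1) := div_nonneg (by linarith) (by linarith)
  have hps := summable_rpow_of_one_le hα.le hp0 hp
  obtain ⟨hsum, hle⟩ := rpow_tsum_mul_le_of_one_lt hα hp0 (fun i => le_max_right _ _) hps hws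
  have htrunc : c ≤ ∑' i, p i * max (w i) 0 :=
    hasSum_le (fun i => mul_le_mul_of_nonneg_left (le_max_left _ _) (hp0 i)) hpw hsum.hasSum
  have hS : 0 ≤ ∑' i, p i ^ α := tsum_nonneg fun i => rpow_nonneg (hp0 i) _
  rw [exp_renyiEntropy hp0 (ne_zero_of_hasSum_one hp) hps, ← neg_sub α 1, div_neg, rpow_neg hS]
  refine mul_inv_le_of_le_mul₀ (rpow_nonneg hS _)
    (tsum_nonneg fun i => rpow_nonneg (le_max_right _ _) _) ?_
  calc c ^ (α / (α - 1)) ≤ (∑' i, p i * max (w i) 0) ^ (α / (α - 1)) :=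
        rpow_le_rpow hc htrunc hexp
    _ ≤ (∑' i, p i ^ α) ^ (1 / (α - 1)) * ∑' i, max (w i) 0 ^ (α / (α - 1)) := hle
    _ = _ := mul_comm _ _

lemma half_le_of_hasSum_midpoint_mul (hp0 : ∀ n, 0 ≤ p n) (hp : HasSum p 1)
    (hm : HasSum (fun n : ℕ => ((n : ℝ) + 1 / 2) * p n) m) : 1 / 2 ≤ m := by
  have hhalf : HasSum (fun n => 1 / 2 * p n) (1 / 2) := by
    simpa only [mul_one] using hp.mul_left (1 / 2)
  exact hasSum_le (fun n => mul_le_mul_of_nonneg_right (by simp) (hp0 n)) hhalf hm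

lemma hasSum_mul_one_add_midpoint_div (hp : HasSum p 1)
    (hm : HasSum (fun n : ℕ => ((n : ℝ) + 1 / 2) * p n) m) (b : ℝ) :
    HasSum (fun n : ℕ => p n * (1 + ((n : ℝ) + 1 / 2) / b)) (1 + m / b) := by
  convert! hp.add (hm.div_const b) using 2
  ring

lemma div_sub_one_add_one (hα : α ≠ 1) : α / (α - 1) + 1 = (2 * α - 1) / (α - 1) := by
  have : α - 1 ≠ 0 := sub_ne_zero.2 hα
  field_simp
  ring

lemma rpow_mul_exp_renyiEntropy_lt_of_lt_one (hα : 1 / 2 < α) (hα1 : α < 1) (hp0 : ∀ n, 0 ≤ p n)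
    (hp : HasSum p 1) (hm : HasSum (fun n : ℕ => ((n : ℝ) + 1 / 2) * p n) m) :
    ((2 * α - 1) / α) ^ (α / (1 - α)) * exp (renyiEntropy α p) < m := by
  have h1α : 0 < 1 - α := sub_pos.2 hα1
  have h2α : 0 < 2 * α - 1 := by linarith
  have hα0 : 0 < α := by linarith
  have hρ : 0 < (2 * α - 1) / α := div_pos h2α hα0
  have hm_half := half_le_of_hasSum_midpoint_mul hp0 hp hm
  have hm0 : 0 < m := by linarith
  -- This scale makes the maximizer `(1 + x / b) ^ (1 / (α - 1))` have mean `m`.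
  set b := m * ((2 * α - 1) / (1 - α)) with hb
  have hb0 : 0 < b := mul_pos hm0 (div_pos h2α h1α)
  have hscale : -b / (α / (α - 1) + 1) = m := by
    rw [div_sub_one_add_one hα1.ne, hb, ← neg_sub 1 α]
    field_simp
  have hmean : 1 + m / b = ((2 * α - 1) / α)⁻¹ := by
    rw [hb]
    field_simp
    ring
  have he : α / (α - 1) < -1 := by
    rw [div_lt_iff_of_neg (by linarith)]
    linarith
  obtain ⟨hws, hlt⟩ := summable_one_add_midpoint_div_rpow_and_tsum_lt hb0 he
  rw [rpow_div_one_sub hρ.le, ← hmean]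
  exact (rpow_mul_exp_renyiEntropy_le_of_lt_one hα0 hα1 hp0 (ne_zero_of_hasSum_one hp)
    (fun n => by positivity) (hasSum_mul_one_add_midpoint_div hp hm b) hws).trans_lt (hscale ▸ hlt)

lemma rpow_mul_exp_renyiEntropy_lt_of_one_lt (hα : 1 < α) (hp0 : ∀ n, 0 ≤ p n)
    (hp : HasSum p 1) (hm : HasSum (fun n : ℕ => ((n : ℝ) + 1 / 2) * p n) m) :
    ((2 * α - 1) / α) ^ (α / (1 - α)) * exp (renyiEntropy α p) < m := by
  have h1α : 0 < α - 1 := sub_pos.2 hα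
  have h2α : 0 < 2 * α - 1 := by linarith
  have hα0 : 0 < α := by linarith
  have hρ : 0 < (2 * α - 1) / α := div_pos h2α hα0
  have hm_half := half_le_of_hasSum_midpoint_mul hp0 hp hm
  -- This scale makes the maximizer, the positive part of `1 - x / b` to the power `1 / (α - 1)`,
  -- have mean `m`.
  set b := m * ((2 * α - 1) / (α - 1)) with hb
  have hb1 : 1 ≤ b := by
    have : 2 ≤ (2 * α - 1) / (α - 1) := by
      rw [le_div_iff₀ h1α]
      linarith
    nlinarith
  have hscale : b / (α / (α - 1) + 1) = m := by
    rw [div_sub_one_add_one hα.ne', hb]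
    field_simp
  have hmean : 1 - m / b = ((2 * α - 1) / α)⁻¹ := by
    have : m ≠ 0 := by linarith
    rw [hb]
    field_simp
    ring
  have he : 1 < α / (α - 1) := by
    rw [one_lt_div h1α]
    linarith
  obtain ⟨hws, hlt⟩ := summable_max_one_sub_midpoint_div_rpow_and_tsum_lt hb1 he
  have hpw : HasSum (fun n : ℕ => p n * (1 - ((n : ℝ) + 1 / 2) / b)) (1 - m / b) := by
    simpa only [div_neg, ← sub_eq_add_neg] using hasSum_mul_one_add_midpoint_div hp hm (-b)
  rw [rpow_div_one_sub hρ.le, ← hmean]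
  exact (rpow_mul_exp_renyiEntropy_le_of_one_lt hα hp0 hp (hmean ▸ inv_nonneg.2 hρ.le) hpw
    hws).trans_lt (hscale ▸ hlt)

end MaximumEntropy

theorem renyi_guessing_bound_general {α : ℝ} (hα : 1 / 2 < α) (hα1 : α ≠ 1) {p : ℕ → ℝ}
    (hp0 : ∀ n, 0 ≤ p n) (hp : HasSum p 1) {G : ℝ}
    (hG : HasSum (fun n : ℕ => ((n : ℝ) + 1) * p n) G) :
    ((2 * α - 1) / α) ^ (α / (1 - α)) * exp (renyiEntropy α p) + 1 / 2 < G := by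
  have hm : HasSum (fun n : ℕ => ((n : ℝ) + 1 / 2) * p n) (G - 1 / 2) := by
    convert! hG.sub (hp.div_const 2) using 2
    ring
  rw [← lt_sub_iff_add_lt]
  rcases hα1.lt_or_gt with h | h
  · exact rpow_mul_exp_renyiEntropy_lt_of_lt_one hα h hp0 hp hm
  · exact rpow_mul_exp_renyiEntropy_lt_of_one_lt h hp0 hp hm

/-- Rényi-entropy lower bound on guessing: for `α > 1/2`, `α ≠ 1`, if `X` is a discrete
random variable whose probabilities arranged in nonincreasing order are `p 0 ≥ p 1 ≥ ⋯`,
with finite guessing entropy `G(X)`, then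
`G(X) > ((2α-1)/α)^{α/(1-α)} · e^{H_α(X)} + 1/2`. -/
theorem renyi_guessing_bound
    (α : ℝ) (hα : 1 / 2 < α) (hα1 : α ≠ 1)
    (p : ℕ → ℝ) (hp0 : ∀ n, 0 ≤ p n) (hmono : Antitone p) (hp1 : ∑' n, p n = 1)
    (G : ℝ) (hG : G = ∑' n : ℕ, ((n : ℝ) + 1) * p n)
    (hGs : Summable (fun n : ℕ => ((n : ℝ) + 1) * p n)) :
    G > ((2 * α - 1) / α) ^ (α / (1 - α))
          * Real.exp ((1 / (1 - α)) * Real.log (∑' n, p n ^ α)) + 1 / 2 := by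
  have hp : Summable p := by_contra fun h => by simp [tsum_eq_zero_of_not_summable h] at hp1
  exact renyi_guessing_bound_general hα hα1 hp0 (hp1 ▸ hp.hasSum) (hG ▸ hGs.hasSum)
end

section
/- Let ρ > 0 and let X be a discrete random variable taking countably many values with finite ρ-th guessing moment G_ρ(X). Then G_ρ(X) > e^{ρH(X)} / ( ρ · (Γ(1 + 1/ρ))^ρ · e ). -/
open MeasureTheory Real

/-!
By Gibbs' inequality, a distribution `p` with mean cost `m = ∑ p i * a i` has entropy at most
`m + log Z`, where `Z = ∑ exp (-a i)`; the termwise form of the inequality dominates the entropy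
series, which therefore converges. Take the cost `a n = c * (n + 1) ^ ρ`, whose mean is `c * G`.
Comparing `Z` with the integral of the strictly decreasing function `exp (-c * x ^ ρ)` gives
`Z < c ^ (-1 / ρ) * Γ(1 + 1 / ρ)`, hence `H < c * G + log (c ^ (-1 / ρ) * Γ(1 + 1 / ρ))` for every
`c > 0`. The right-hand side is smallest at `c = 1 / (ρ * G)`, which gives the bound.
-/

section Gibbs

variable {ι : Type*} {p q a : ι → ℝ} {m t : ℝ}

lemma negMulLog_le_sub_sub_mul_log {x y : ℝ} (hx : 0 ≤ x) (hy : 0 < y) :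
    negMulLog x ≤ y - x - x * log y := by
  calc negMulLog x = y * negMulLog (x / y) + x / y * negMulLog y := by
        rw [← negMulLog_mul, div_mul_cancel₀ x hy.ne']
    _ ≤ y * (1 - x / y) + x / y * negMulLog y := by
        gcongr
        exact negMulLog_le_one_sub_self (by positivity)
    _ = y - x - x * log y := by
        rw [negMulLog]
        field_simp
        ring

lemma summable_negMulLog_of_summable_mul_log (hp0 : ∀ i, 0 ≤ p i) (hp1 : HasSum p 1)
    (hq0 : ∀ i, 0 < q i) (hq : Summable q) (hpq : Summable fun i ↦ p i * log (q i)) :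
    Summable fun i ↦ negMulLog (p i) :=
  ((hq.sub hp1.summable).sub hpq).of_nonneg_of_le
    (fun i ↦ negMulLog_nonneg (hp0 i) (le_hasSum hp1 i fun j _ ↦ hp0 j))
    fun i ↦ negMulLog_le_sub_sub_mul_log (hp0 i) (hq0 i)

lemma tsum_negMulLog_le_neg_tsum_mul_log (hp0 : ∀ i, 0 ≤ p i) (hp1 : HasSum p 1)
    (hq0 : ∀ i, 0 < q i) (hq : HasSum q t) (ht : t ≤ 1)
    (hpq : Summable fun i ↦ p i * log (q i)) :
    ∑' i, negMulLog (p i) ≤ -∑' i, p i * log (q i) := by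
  have hH := summable_negMulLog_of_summable_mul_log hp0 hp1 hq0 hq.summable hpq
  have hle := hasSum_le (fun i ↦ negMulLog_le_sub_sub_mul_log (hp0 i) (hq0 i)) hH.hasSum
    ((hq.sub hp1).sub hpq.hasSum)
  linarith

lemma tsum_negMulLog_le_add_log_tsum_exp_neg (hp0 : ∀ i, 0 ≤ p i) (hp1 : HasSum p 1)
    (ha : Summable fun i ↦ exp (-a i)) (hpa : HasSum (fun i ↦ p i * a i) m) :
    ∑' i, negMulLog (p i) ≤ m + log (∑' i, exp (-a i)) := by
  set Z := ∑' i, exp (-a i) with hZdef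
  have : Nonempty ι := by
    by_contra! h
    exact one_ne_zero (hp1.unique hasSum_empty)
  have hZ : 0 < Z := ha.tsum_pos (fun i ↦ (exp_pos _).le) (Classical.arbitrary ι) (exp_pos _)
  have hq : HasSum (fun i ↦ exp (-a i) / Z) 1 := by
    simpa only [← hZdef, div_self hZ.ne'] using ha.hasSum.div_const Z
  have hpq : HasSum (fun i ↦ p i * log (exp (-a i) / Z)) (-m - log Z) := by
    convert! hpa.neg.sub (hp1.mul_right (log Z)) using 2 with i
    · rw [log_div (exp_pos _).ne' hZ.ne', log_exp]
      ring
    · ring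
  have hle := tsum_negMulLog_le_neg_tsum_mul_log hp0 hp1 (fun i ↦ by positivity) hq le_rfl
    hpq.summable
  rw [hpq.tsum_eq] at hle
  linarith

end Gibbs

section IntegralComparison

variable {f : ℝ → ℝ} {a b ρ c : ℝ}

lemma sub_mul_lt_integral_of_strictAntiOn (hab : a < b) (hf : StrictAntiOn f (Set.Icc a b)) :
    (b - a) * f b < ∫ x in a..b, f x := by
  have hint : IntervalIntegrable f volume a b :=
    AntitoneOn.intervalIntegrable (by simpa only [Set.uIcc_of_le hab.le] using hf.antitoneOn)
  have hpos : 0 < ∫ x in a..b, (f x - f b) :=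
    intervalIntegral.intervalIntegral_pos_of_pos_on (hint.sub intervalIntegrable_const)
      (fun x hx ↦ sub_pos.mpr (hf ⟨hx.1.le, hx.2.le⟩ (Set.right_mem_Icc.mpr hab.le) hx.2)) hab
  simpa [intervalIntegral.integral_sub hint intervalIntegrable_const] using hpos

lemma tsum_add_one_lt_integral_of_strictAntiOn (hf : StrictAntiOn f (Set.Ici 0))
    (hint : IntegrableOn f (Set.Ioi 0)) (hf0 : ∀ x ∈ Set.Ioi 0, 0 ≤ f x) :
    ∑' n : ℕ, f (n + 1) < ∫ x in Set.Ioi 0, f x := by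
  have hsum : Summable fun n : ℕ ↦ f (n + 1) := mod_cast
    (summable_nat_add_iff 1).mpr (hf.antitoneOn.summable_of_integrableOn_Ioi_zero hint hf0)
  have hsub : Set.Ioi (1 : ℝ) ⊆ Set.Ioi 0 := Set.Ioi_subset_Ioi zero_le_one
  have htail : ∑' n : ℕ, f (n + 1 + 1) ≤ ∫ x in Set.Ioi 1, f x := by
    have hanti : AntitoneOn f (Set.Ici 1) :=
      hf.antitoneOn.mono (Set.Ici_subset_Ici.mpr zero_le_one)
    exact_mod_cast AntitoneOn.tsum_comp_add_le_integral 1 (mod_cast hanti)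
      (mod_cast hint.mono_set hsub) (mod_cast fun x hx ↦ hf0 x (hsub hx))
  have hhead : f 1 < ∫ x in (0 : ℝ)..1, f x := by
    simpa using sub_mul_lt_integral_of_strictAntiOn one_pos (hf.mono Set.Icc_subset_Ici_self)
  calc ∑' n : ℕ, f (n + 1) = f 1 + ∑' n : ℕ, f (n + 1 + 1) := by
        simpa using hsum.tsum_eq_zero_add
    _ < (∫ x in (0 : ℝ)..1, f x) + ∫ x in Set.Ioi 1, f x :=
        add_lt_add_of_lt_of_le hhead htail
    _ = ∫ x in Set.Ioi 0, f x :=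
        intervalIntegral.integral_interval_add_Ioi hint (hint.mono_set hsub)

lemma strictAntiOn_exp_neg_mul_rpow (hρ : 0 < ρ) (hc : 0 < c) :
    StrictAntiOn (fun x : ℝ ↦ exp (-c * x ^ ρ)) (Set.Ici 0) := fun _ hx _ _ hxy ↦
  exp_lt_exp.mpr (mul_lt_mul_of_neg_left (rpow_lt_rpow hx hxy hρ) (neg_lt_zero.mpr hc))

lemma integrableOn_exp_neg_mul_rpow (hρ : 0 < ρ) (hc : 0 < c) :
    IntegrableOn (fun x : ℝ ↦ exp (-c * x ^ ρ)) (Set.Ioi 0) := by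
  simpa using integrableOn_rpow_mul_exp_neg_mul_rpow (s := 0) (by norm_num) hρ hc

lemma summable_exp_neg_mul_add_one_rpow (hρ : 0 < ρ) (hc : 0 < c) :
    Summable fun n : ℕ ↦ exp (-c * ((n : ℝ) + 1) ^ ρ) := mod_cast
  (summable_nat_add_iff 1).mpr <|
    (strictAntiOn_exp_neg_mul_rpow hρ hc).antitoneOn.summable_of_integrableOn_Ioi_zero
      (integrableOn_exp_neg_mul_rpow hρ hc) fun _ _ ↦ (exp_pos _).le

lemma tsum_exp_neg_mul_add_one_rpow_lt (hρ : 0 < ρ) (hc : 0 < c) :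
    ∑' n : ℕ, exp (-c * ((n : ℝ) + 1) ^ ρ) < c ^ (-1 / ρ) * Gamma (1 + 1 / ρ) := by
  rw [add_comm 1, ← integral_exp_neg_mul_rpow hρ hc]
  exact tsum_add_one_lt_integral_of_strictAntiOn (strictAntiOn_exp_neg_mul_rpow hρ hc)
    (integrableOn_exp_neg_mul_rpow hρ hc) fun _ _ ↦ (exp_pos _).le

end IntegralComparison

section GuessingMoment

variable {ρ c G : ℝ} {p : ℕ → ℝ}

lemma tsum_negMulLog_lt_mul_moment_add_log (hρ : 0 < ρ) (hc : 0 < c) (hp0 : ∀ n, 0 ≤ p n)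
    (hp1 : HasSum p 1) (hG : HasSum (fun n : ℕ ↦ ((n : ℝ) + 1) ^ ρ * p n) G) :
    ∑' n, negMulLog (p n) < c * G + log (c ^ (-1 / ρ) * Gamma (1 + 1 / ρ)) := by
  have hsum := summable_exp_neg_mul_add_one_rpow hρ hc
  have hmean : HasSum (fun n : ℕ ↦ p n * (c * ((n : ℝ) + 1) ^ ρ)) (c * G) := by
    convert! hG.mul_left c using 2 with n
    ring
  calc ∑' n, negMulLog (p n) ≤ c * G + log (∑' n : ℕ, exp (-c * ((n : ℝ) + 1) ^ ρ)) := by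
        simp only [neg_mul] at hsum ⊢
        exact tsum_negMulLog_le_add_log_tsum_exp_neg hp0 hp1 hsum hmean
    _ < c * G + log (c ^ (-1 / ρ) * Gamma (1 + 1 / ρ)) := by
        gcongr
        · exact hsum.tsum_pos (fun n ↦ (exp_pos _).le) 0 (exp_pos _)
        · exact tsum_exp_neg_mul_add_one_rpow_lt hρ hc

lemma one_le_moment (hρ : 0 ≤ ρ) (hp0 : ∀ n, 0 ≤ p n) (hp1 : HasSum p 1)
    (hG : HasSum (fun n : ℕ ↦ ((n : ℝ) + 1) ^ ρ * p n) G) : 1 ≤ G :=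
  hasSum_le (fun n ↦ le_mul_of_one_le_left (hp0 n) (one_le_rpow (by simp) hρ)) hp1 hG

lemma exp_mul_add_log_rpow_mul_Gamma (hρ : 0 < ρ) (hG : 0 < G) :
    exp (ρ * (1 / (ρ * G) * G + log ((1 / (ρ * G)) ^ (-1 / ρ) * Gamma (1 + 1 / ρ)))) =
      G * (ρ * Gamma (1 + 1 / ρ) ^ ρ * exp 1) := by
  have hΓ : 0 < Gamma (1 + 1 / ρ) := Gamma_pos_of_pos (by positivity)
  have hpow : ((1 / (ρ * G)) ^ (-1 / ρ)) ^ ρ = ρ * G := by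
    rw [← rpow_mul (by positivity), div_mul_cancel₀ _ hρ.ne', rpow_neg_one, one_div, inv_inv]
  calc _ = exp (1 + log ((1 / (ρ * G)) ^ (-1 / ρ) * Gamma (1 + 1 / ρ)) * ρ) := by
        congr 1
        field_simp
    _ = exp 1 * (((1 / (ρ * G)) ^ (-1 / ρ)) ^ ρ * Gamma (1 + 1 / ρ) ^ ρ) := by
        rw [exp_add, ← rpow_def_of_pos (by positivity), mul_rpow (by positivity) hΓ.le]
    _ = G * (ρ * Gamma (1 + 1 / ρ) ^ ρ * exp 1) := by
        rw [hpow]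
        ring

theorem guessing_moment_bound_general (hρ : 0 < ρ) (hp0 : ∀ n, 0 ≤ p n) (hp1 : HasSum p 1)
    (hG : HasSum (fun n : ℕ ↦ ((n : ℝ) + 1) ^ ρ * p n) G) :
    exp (ρ * ∑' n, negMulLog (p n)) / (ρ * Gamma (1 + 1 / ρ) ^ ρ * exp 1) < G := by
  have hGpos : 0 < G := one_pos.trans_le (one_le_moment hρ.le hp0 hp1 hG)
  rw [div_lt_iff₀ (by positivity), ← exp_mul_add_log_rpow_mul_Gamma hρ hGpos]
  gcongr
  exact tsum_negMulLog_lt_mul_moment_add_log hρ (by positivity) hp0 hp1 hG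

end GuessingMoment

/-- Lower bound on guessing moments: for `ρ > 0`, if `X` is a discrete random variable whose
probabilities arranged in nonincreasing order are `p 0 ≥ p 1 ≥ ⋯`, with finite `ρ`-th
guessing moment `G_ρ(X) = Σ_{k≥1} k^ρ·p_(k)`, then
`G_ρ(X) > e^{ρH(X)} / (ρ·Γ(1+1/ρ)^ρ·e)`. -/
theorem guessing_moment_bound
    (ρ : ℝ) (hρ : 0 < ρ)
    (p : ℕ → ℝ) (hp0 : ∀ n, 0 ≤ p n) (hmono : Antitone p) (hp1 : ∑' n, p n = 1)
    (Gρ : ℝ) (hGρ : Gρ = ∑' n : ℕ, ((n : ℝ) + 1) ^ ρ * p n)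
    (hGρs : Summable (fun n : ℕ => ((n : ℝ) + 1) ^ ρ * p n)) :
    Gρ > Real.exp (ρ * ∑' n, p n * Real.log (1 / p n))
          / (ρ * Real.Gamma (1 + 1 / ρ) ^ ρ * Real.exp 1) := by
  have hp : Summable p := not_imp_comm.mp tsum_eq_zero_of_not_summable (hp1.trans_ne one_ne_zero)
  simpa [negMulLog] using guessing_moment_bound_general hρ hp0 (hp1 ▸ hp.hasSum) (hGρ ▸ hGρs.hasSum)
end
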